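/- For every 1-Lipschitz function f : ℤ₊ → ℝ and every n ∈ ℤ₊, the second difference of the Stein solution satisfies |Δ²g̃_f(n)| ≤ 2/a + b/((a+1)b + 1 + a/2). -/

import Mathlib

/-!
Let `X` have the stationary law `p` of a birth-death chain with constant birth rate `a` and death
rates `β`. If `β` and `n ↦ 1 / β (n + 1)` are convex, then so are the ratios
`U n = P(X ≤ n) / P(X = n)` and `V n = P(X > n) / P(X = n)`. The Stein solution `g` of a monotone
`f` satisfies `a * g (n + 1) = -(P * V n + Q * U n)`, where `P` and `Q` are the expected shortfall
and excess of `f X` relative to `f (n + 1)`, on `X ≤ n` and on `X > n`. Replacing `n` by `n + 1`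
keeps `P` and `Q`, and replacing it by `n + 2` only adds `f (n + 2) - f (n + 1)` to the right-hand
side, so convexity of `U` and `V` bounds the second difference of `g` by `Δf / a`.

A `1`-Lipschitz `f` is the difference of the monotone function `f + id`, with increments at most
`2`, and `id`. For `β n = n + b n (n - 1)` the Stein solution of `-id` is explicit,
`n ↦ E[1 / (1 + b (n - 1 + X))]` for `n ≥ 1`. Its second differences decrease from `n = 1` on, and
the first of them is estimated from the first Stein equations.
-/

open Finset

/-! ### Convex sequences -/

/-- Convexity of a real sequence: its second differences are nonnegative. -/
def IsConvexSeq (u : ℕ → ℝ) : Prop :=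
  ∀ n, 2 * u (n + 1) ≤ u n + u (n + 2)

lemma two_mul_mul_le_mul_add_mul {x₀ x₁ x₂ y₀ y₁ y₂ : ℝ} (hx₀ : 0 ≤ x₀) (hy₂ : 0 ≤ y₂)
    (hx : 2 * x₁ ≤ x₀ + x₂) (hy : 2 * y₁ ≤ y₀ + y₂) (hxy : 0 ≤ (x₀ - x₁) * (y₁ - y₂)) :
    2 * (x₁ * y₁) ≤ x₀ * y₀ + x₂ * y₂ := by
  have h₁ := mul_nonneg hx₀ (sub_nonneg.2 hy)
  have h₂ := mul_nonneg hy₂ (sub_nonneg.2 hx)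
  linarith

namespace IsConvexSeq

variable {u v : ℕ → ℝ}

lemma const_mul {c : ℝ} (hu : IsConvexSeq u) (hc : 0 ≤ c) : IsConvexSeq fun n ↦ c * u n := by
  intro n
  have := mul_le_mul_of_nonneg_left (hu n) hc
  linarith

lemma mul_of_antitone (hu : IsConvexSeq u) (hv : IsConvexSeq v) (hu' : Antitone u)
    (hv' : Antitone v) (hu₀ : ∀ n, 0 ≤ u n) (hv₀ : ∀ n, 0 ≤ v n) :
    IsConvexSeq fun n ↦ u n * v n := fun n ↦
  two_mul_mul_le_mul_add_mul (hu₀ n) (hv₀ (n + 2)) (hu n) (hv n) <|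
    mul_nonneg (sub_nonneg.2 (hu' n.le_succ)) (sub_nonneg.2 (hv' (n + 1).le_succ))

lemma monotone (hu : IsConvexSeq u) (h : u 0 ≤ u 1) : Monotone u := by
  refine monotone_nat_of_le_succ fun n ↦ ?_
  induction n with
  | zero => exact h
  | succ n ih => linarith [hu n]

end IsConvexSeq

lemma inv_second_difference_eq {x t : ℝ} (hx : 0 < x) (ht : 0 ≤ t) :
    x⁻¹ - 2 * (x + t)⁻¹ + (x + 2 * t)⁻¹ = 2 * t ^ 2 / (x * (x + t) * (x + 2 * t)) := by
  have : 0 < x + t := by positivity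
  have : 0 < x + 2 * t := by positivity
  field_simp
  ring

lemma inv_second_difference_le {x y t : ℝ} (hx : 0 < x) (ht : 0 ≤ t) (hxy : x ≤ y) :
    y⁻¹ - 2 * (y + t)⁻¹ + (y + 2 * t)⁻¹ ≤ x⁻¹ - 2 * (x + t)⁻¹ + (x + 2 * t)⁻¹ := by
  have hy := hx.trans_le hxy
  rw [inv_second_difference_eq hx ht, inv_second_difference_eq hy ht]
  gcongr

lemma isConvexSeq_inv_add_mul {x t : ℝ} (hx : 0 < x) (ht : 0 ≤ t) :
    IsConvexSeq fun n ↦ (x + t * n)⁻¹ := by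
  intro n
  have h := inv_second_difference_eq (x := x + t * n) (by positivity) ht
  have h₀ : 0 ≤ 2 * t ^ 2 / ((x + t * n) * (x + t * n + t) * (x + t * n + 2 * t)) := by positivity
  have h₁ : x + t * (n + 1 : ℕ) = x + t * n + t := by push_cast; ring
  have h₂ : x + t * (n + 2 : ℕ) = x + t * n + 2 * t := by push_cast; ring
  simp only [h₁, h₂]
  linarith

lemma antitone_inv_add_mul {x t : ℝ} (hx : 0 < x) (ht : 0 ≤ t) :
    Antitone fun n : ℕ ↦ (x + t * n)⁻¹ := by
  intro m n hmn
  beta_reduce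
  gcongr

/-! ### Stationary laws of birth-death chains -/

/-- `p` is the stationary law of the birth-death chain on `ℕ` with constant birth rate `a` and
death rate `β n` at `n`, expressed by detailed balance. -/
structure IsStationaryLaw (a : ℝ) (β p : ℕ → ℝ) : Prop where
  pos : ∀ n, 0 < p n
  balance : ∀ n, β (n + 1) * p (n + 1) = a * p n
  hasSum_one : HasSum p 1

/-- The ratio `P(X ≤ n) / P(X = n)` for a random variable `X` with mass function `p`. -/
noncomputable def lowerMillsRatio (p : ℕ → ℝ) (n : ℕ) : ℝ :=
  (∑ k ∈ range (n + 1), p k) / p n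

/-- The ratio `P(X > n) / P(X = n)` for a random variable `X` with mass function `p`. -/
noncomputable def upperMillsRatio (p : ℕ → ℝ) (n : ℕ) : ℝ :=
  (∑' k, p (n + (k + 1))) / p n

namespace IsStationaryLaw

variable {a : ℝ} {β p f : ℕ → ℝ}

lemma rate_pos (hp : IsStationaryLaw a β p) (ha : 0 < a) (n : ℕ) : 0 < β (n + 1) := by
  have h : 0 < β (n + 1) * p (n + 1) := hp.balance n ▸ mul_pos ha (hp.pos n)
  exact (mul_pos_iff_of_pos_right (hp.pos _)).1 h

lemma rate_monotone (hp : IsStationaryLaw a β p) (ha : 0 < a) (hβ₀ : β 0 = 0)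
    (hβ : IsConvexSeq β) : Monotone β :=
  hβ.monotone (hβ₀ ▸ (hp.rate_pos ha 0).le)

lemma lowerMillsRatio_zero (hp : IsStationaryLaw a β p) : lowerMillsRatio p 0 = 1 := by
  simp [lowerMillsRatio, (hp.pos 0).ne']

lemma lowerMillsRatio_nonneg (hp : IsStationaryLaw a β p) (n : ℕ) : 0 ≤ lowerMillsRatio p n :=
  div_nonneg (sum_nonneg fun k _ ↦ (hp.pos k).le) (hp.pos n).le

lemma mul_lowerMillsRatio_succ (hp : IsStationaryLaw a β p) (n : ℕ) :
    a * lowerMillsRatio p (n + 1) = β (n + 1) * lowerMillsRatio p n + a := by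
  have h₀ := hp.pos n
  have h₁ := hp.pos (n + 1)
  rw [lowerMillsRatio, lowerMillsRatio, sum_range_succ _ (n + 1)]
  field_simp
  linear_combination -(∑ k ∈ range (n + 1), p k) * hp.balance n

lemma lowerMillsRatio_monotone (hp : IsStationaryLaw a β p) (ha : 0 < a) (hβ : Monotone β) :
    Monotone (lowerMillsRatio p) := by
  refine monotone_nat_of_le_succ fun n ↦ le_of_mul_le_mul_left ?_ ha
  induction n with
  | zero =>
    rw [hp.mul_lowerMillsRatio_succ, hp.lowerMillsRatio_zero]
    linarith [hp.rate_pos ha 0]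
  | succ n ih =>
    rw [hp.mul_lowerMillsRatio_succ, hp.mul_lowerMillsRatio_succ]
    gcongr
    · exact hp.lowerMillsRatio_nonneg n
    · exact (hp.rate_pos ha (n + 1)).le
    · exact hβ (by lia)
    · exact le_of_mul_le_mul_left ih ha

lemma isConvexSeq_lowerMillsRatio (hp : IsStationaryLaw a β p) (ha : 0 < a) (hβ₀ : β 0 = 0)
    (hβ : IsConvexSeq β) : IsConvexSeq (lowerMillsRatio p) := by
  have hβm := hp.rate_monotone ha hβ₀ hβ
  have hU := hp.lowerMillsRatio_monotone ha hβm
  intro n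
  induction n with
  | zero =>
    have h₁ := hp.mul_lowerMillsRatio_succ 0
    have h₂ := hp.mul_lowerMillsRatio_succ 1
    have h₀₁ : β 2 * lowerMillsRatio p 0 ≤ β 2 * lowerMillsRatio p 1 :=
      mul_le_mul_of_nonneg_left (hU zero_le_one) (hp.rate_pos ha 1).le
    have hβ₁ := hβ 0
    rw [hp.lowerMillsRatio_zero] at h₁ h₀₁ ⊢
    exact le_of_mul_le_mul_left (by linarith) ha
  | succ n ih =>
    have hprod := two_mul_mul_le_mul_add_mul (hp.rate_pos ha n).le
      (hp.lowerMillsRatio_nonneg (n + 2)) (hβ (n + 1)) ih <|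
      mul_nonneg_of_nonpos_of_nonpos (sub_nonpos.2 (hβm (n + 1).le_succ))
        (sub_nonpos.2 (hU (n + 1).le_succ))
    have h₀ := hp.mul_lowerMillsRatio_succ n
    have h₁ := hp.mul_lowerMillsRatio_succ (n + 1)
    have h₂ := hp.mul_lowerMillsRatio_succ (n + 2)
    exact le_of_mul_le_mul_left (by linarith) ha

lemma ratio_add_succ (hp : IsStationaryLaw a β p) (ha : 0 < a) (i n : ℕ) :
    p (n + (i + 1)) / p n = a * (β (n + 1))⁻¹ * (p (n + 1 + i) / p (n + 1)) := by
  have hβ := hp.rate_pos ha n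
  have h₀ := hp.pos n
  have h₁ := hp.pos (n + 1)
  rw [← add_assoc, add_right_comm]
  field_simp
  linear_combination p (n + 1 + i) * hp.balance n

lemma antitone_and_isConvexSeq_ratio (hp : IsStationaryLaw a β p) (ha : 0 < a) (hβ : Monotone β)
    (hβi : IsConvexSeq fun n ↦ (β (n + 1))⁻¹) (i : ℕ) :
    (Antitone fun n ↦ p (n + i) / p n) ∧ IsConvexSeq fun n ↦ p (n + i) / p n := by
  induction i with
  | zero =>
    simp only [add_zero, div_self (hp.pos _).ne']
    exact ⟨antitone_const, fun n ↦ by norm_num⟩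
  | succ i ih =>
    have hβ₀ (n : ℕ) : 0 ≤ a * (β (n + 1))⁻¹ :=
      mul_nonneg ha.le (inv_nonneg.2 (hp.rate_pos ha n).le)
    have hβa : Antitone fun n ↦ a * (β (n + 1))⁻¹ := fun m n hmn ↦
      mul_le_mul_of_nonneg_left (inv_anti₀ (hp.rate_pos ha m) (hβ (by lia))) ha.le
    have hr₀ (n : ℕ) : 0 ≤ p (n + 1 + i) / p (n + 1) := (div_pos (hp.pos _) (hp.pos _)).le
    have hra : Antitone fun n ↦ p (n + 1 + i) / p (n + 1) := fun m n hmn ↦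
      ih.1 (Nat.succ_le_succ hmn)
    simp only [hp.ratio_add_succ ha]
    exact ⟨fun m n hmn ↦ mul_le_mul (hβa hmn) (hra hmn) (hr₀ n) (hβ₀ m),
      (hβi.const_mul ha.le).mul_of_antitone (fun n ↦ ih.2 (n + 1)) hβa hra hβ₀ hr₀⟩

lemma hasSum_upperMillsRatio (hp : IsStationaryLaw a β p) (n : ℕ) :
    HasSum (fun i ↦ p (n + (i + 1)) / p n) (upperMillsRatio p n) := by
  have h : Summable fun i ↦ p (n + (i + 1)) := by
    simpa only [add_comm, add_left_comm] using
      (summable_nat_add_iff (n + 1)).2 hp.hasSum_one.summable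
  exact h.hasSum.div_const _

lemma isConvexSeq_upperMillsRatio (hp : IsStationaryLaw a β p) (ha : 0 < a) (hβ : Monotone β)
    (hβi : IsConvexSeq fun n ↦ (β (n + 1))⁻¹) : IsConvexSeq (upperMillsRatio p) := fun n ↦
  hasSum_le (fun i ↦ (hp.antitone_and_isConvexSeq_ratio ha hβ hβi (i + 1)).2 n)
    ((hp.hasSum_upperMillsRatio (n + 1)).mul_left 2)
    ((hp.hasSum_upperMillsRatio n).add (hp.hasSum_upperMillsRatio (n + 2)))

lemma lowerMillsRatio_add_upperMillsRatio (hp : IsStationaryLaw a β p) (n : ℕ) :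
    lowerMillsRatio p n + upperMillsRatio p n = (p n)⁻¹ := by
  have h := hp.hasSum_one.summable.sum_add_tsum_nat_add (n + 1)
  rw [hp.hasSum_one.tsum_eq] at h
  rw [lowerMillsRatio, upperMillsRatio, ← add_div, inv_eq_one_div, ← h]
  simp only [add_left_comm]

lemma sum_range_le_mean_sub (hp : IsStationaryLaw a β p) (hf : Monotone f)
    (hfs : Summable fun k ↦ f k * p k) (N : ℕ) :
    ∑ k ∈ range N, (f k - f N) * p k ≤ ∑' k, f k * p k - f N := by
  have h : HasSum (fun k ↦ (f k - f N) * p k) (∑' k, f k * p k - f N) := by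
    simpa only [sub_mul, mul_one] using hfs.hasSum.sub (hp.hasSum_one.mul_left (f N))
  refine sum_le_hasSum _ (fun k hk ↦ ?_) h
  exact mul_nonneg (sub_nonneg.2 (hf (by simpa using hk))) (hp.pos k).le

lemma hasSum_rate_mul (hp : IsStationaryLaw a β p) (hβ₀ : β 0 = 0) {h : ℕ → ℝ} {s : ℝ}
    (hs : HasSum (fun k ↦ p k * h (k + 1)) s) : HasSum (fun k ↦ β k * p k * h k) (a * s) := by
  rw [← hasSum_nat_add_iff' 1]
  simpa [hβ₀, hp.balance, mul_assoc] using hs.mul_left a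

end IsStationaryLaw

/-! ### The Stein equation -/

/-- `g` solves the Stein equation of the birth-death chain with birth rate `a`, death rates `β` and
stationary law `p` for the integrable function `f`. When `β 0 = 0` the equations do not
determine `g 0`, which is fixed by `g 0 = g 1`. -/
structure IsSteinSolution (a : ℝ) (β p f g : ℕ → ℝ) : Prop where
  summable : Summable fun k ↦ f k * p k
  zero_eq_one : g 0 = g 1
  equation : ∀ n, a * g (n + 1) - β n * g n = f n - ∑' k, f k * p k

namespace IsSteinSolution

variable {a : ℝ} {β p f f' g g' : ℕ → ℝ}

lemma neg (hg : IsSteinSolution a β p f g) :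
    IsSteinSolution a β p (fun n ↦ -f n) (fun n ↦ -g n) where
  summable := by simpa only [neg_mul] using hg.summable.neg
  zero_eq_one := by rw [hg.zero_eq_one]
  equation n := by
    simp only [neg_mul, tsum_neg]
    linear_combination -hg.equation n

lemma sub (hg : IsSteinSolution a β p f g) (hg' : IsSteinSolution a β p f' g') :
    IsSteinSolution a β p (fun n ↦ f n - f' n) (fun n ↦ g n - g' n) where
  summable := by simpa only [sub_mul] using hg.summable.sub hg'.summable
  zero_eq_one := by rw [hg.zero_eq_one, hg'.zero_eq_one]
  equation n := by
    simp only [sub_mul, hg.summable.tsum_sub hg'.summable]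
    linear_combination hg.equation n - hg'.equation n

lemma mul_mul_succ_eq_sum (hg : IsSteinSolution a β p f g) (hp : IsStationaryLaw a β p)
    (hβ₀ : β 0 = 0) (n : ℕ) :
    a * g (n + 1) * p n = ∑ k ∈ range (n + 1), (f k - ∑' j, f j * p j) * p k := by
  induction n with
  | zero =>
    have h := hg.equation 0
    rw [hβ₀, zero_mul, sub_zero] at h
    simp [h]
  | succ n ih =>
    rw [sum_range_succ, ← ih, ← hg.equation (n + 1)]
    linear_combination g (n + 1) * hp.balance n

lemma mul_succ_eq_millsRatio (hg : IsSteinSolution a β p f g) (hp : IsStationaryLaw a β p)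
    (hβ₀ : β 0 = 0) (c : ℝ) (n : ℕ) :
    a * g (n + 1) = -((∑ k ∈ range (n + 1), (c - f k) * p k) * upperMillsRatio p n +
      (∑' k, f k * p k - c + ∑ k ∈ range (n + 1), (c - f k) * p k) * lowerMillsRatio p n) := by
  have hpn := hp.pos n
  have hsum : ∑ k ∈ range (n + 1), (f k - ∑' j, f j * p j) * p k =
      -(∑ k ∈ range (n + 1), (c - f k) * p k) -
        (∑' k, f k * p k - c) * ∑ k ∈ range (n + 1), p k := by
    rw [mul_sum, ← sum_neg_distrib, ← sum_sub_distrib]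
    exact sum_congr rfl fun k _ ↦ by ring
  have hV := eq_sub_of_add_eq' (hp.lowerMillsRatio_add_upperMillsRatio n)
  rw [eq_div_of_mul_eq hpn.ne' (hg.mul_mul_succ_eq_sum hp hβ₀ n), hsum, hV, lowerMillsRatio]
  field_simp
  ring

lemma mul_second_difference_succ_eq (hg : IsSteinSolution a β p f g)
    (hp : IsStationaryLaw a β p) (hβ₀ : β 0 = 0) {n : ℕ} {P Q : ℝ}
    (hP : P = ∑ k ∈ range (n + 1), (f (n + 1) - f k) * p k)
    (hQ : Q = ∑' k, f k * p k - f (n + 1) + P) :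
    a * (g (n + 3) - 2 * g (n + 2) + g (n + 1)) = f (n + 2) - f (n + 1) -
      P * (upperMillsRatio p n + upperMillsRatio p (n + 2) - 2 * upperMillsRatio p (n + 1)) -
      Q * (lowerMillsRatio p n + lowerMillsRatio p (n + 2) - 2 * lowerMillsRatio p (n + 1)) := by
  have h₀ := hg.mul_succ_eq_millsRatio hp hβ₀ (f (n + 1)) n
  have h₁ := hg.mul_succ_eq_millsRatio hp hβ₀ (f (n + 1)) (n + 1)
  have h₂ := hg.mul_succ_eq_millsRatio hp hβ₀ (f (n + 1)) (n + 2)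
  rw [sum_range_succ _ (n + 2), ← add_assoc] at h₂
  rw [sum_range_succ _ (n + 1), sub_self, zero_mul, add_zero, ← hP, ← hQ] at h₁ h₂
  rw [← hP, ← hQ] at h₀
  have hUV : (lowerMillsRatio p (n + 2) + upperMillsRatio p (n + 2)) * p (n + 2) = 1 := by
    rw [hp.lowerMillsRatio_add_upperMillsRatio, inv_mul_cancel₀ (hp.pos _).ne']
  linear_combination h₂ - 2 * h₁ + h₀ + (f (n + 2) - f (n + 1)) * hUV

theorem second_difference_le_of_monotone (hg : IsSteinSolution a β p f g)
    (hp : IsStationaryLaw a β p) (ha : 0 < a) (hβ₀ : β 0 = 0) (hβ : IsConvexSeq β)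
    (hβi : IsConvexSeq fun n ↦ (β (n + 1))⁻¹) (hf : Monotone f) (n : ℕ) :
    g (n + 2) - 2 * g (n + 1) + g n ≤ (f (n + 1) - f n) / a := by
  rw [le_div_iff₀' ha]
  have hmean := hp.sum_range_le_mean_sub hf hg.summable
  cases n with
  | zero =>
    have h₀ := hg.equation 0
    have h₁ := hg.equation 1
    have hm := hmean 0
    rw [hβ₀] at h₀
    rw [range_zero, sum_empty] at hm
    have hg₁ : g 1 ≤ 0 := nonpos_of_mul_nonpos_right (by linarith) ha
    have := mul_nonpos_of_nonneg_of_nonpos (hp.rate_pos ha 0).le hg₁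
    rw [hg.zero_eq_one]
    linarith
  | succ n =>
    set P := ∑ k ∈ range (n + 1), (f (n + 1) - f k) * p k with hP
    have hP₀ : 0 ≤ P := sum_nonneg fun k hk ↦
      mul_nonneg (sub_nonneg.2 (hf (mem_range.1 hk).le)) (hp.pos k).le
    have hQ₀ : 0 ≤ ∑' k, f k * p k - f (n + 1) + P := by
      have hneg : ∑ k ∈ range (n + 1), (f k - f (n + 1)) * p k = -P := by
        rw [hP, ← sum_neg_distrib]
        exact sum_congr rfl fun k _ ↦ by ring
      linarith [hmean (n + 1)]
    have hV := hp.isConvexSeq_upperMillsRatio ha (hp.rate_monotone ha hβ₀ hβ) hβi n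
    have hU := hp.isConvexSeq_lowerMillsRatio ha hβ₀ hβ n
    rw [hg.mul_second_difference_succ_eq hp hβ₀ hP rfl]
    linarith [mul_nonneg hP₀ (sub_nonneg.2 hV), mul_nonneg hQ₀ (sub_nonneg.2 hU)]

end IsSteinSolution

/-! ### The polynomial birth-death distribution -/

/-- The death rates `n + b n (n - 1)` of `PBD(a; 0, 1, b)`. -/
def pbdRate (b : ℝ) (n : ℕ) : ℝ :=
  n + b * n * (n - 1)

/-- The mean of `1 / (1 + b (n + X))` for a random variable `X` with mass function `p`. If `p` is
`PBD(a; 0, 1, b)`, this is the value at `n + 1` of the Stein solution of `-id`. -/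
noncomputable def inverseMean (b : ℝ) (p : ℕ → ℝ) (n : ℕ) : ℝ :=
  ∑' k : ℕ, p k * (1 + b * ((n : ℝ) + k))⁻¹

section PolynomialRates

variable {a b : ℝ} {p f g : ℕ → ℝ}

lemma pbdRate_zero (b : ℝ) : pbdRate b 0 = 0 := by
  simp [pbdRate]

lemma pbdRate_succ (b : ℝ) (n : ℕ) : pbdRate b (n + 1) = (1 + n) * (1 + b * n) := by
  rw [pbdRate]
  push_cast
  ring

lemma isConvexSeq_pbdRate (hb : 0 ≤ b) : IsConvexSeq (pbdRate b) := by
  intro n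
  simp only [pbdRate]
  push_cast
  linarith

lemma isConvexSeq_inv_pbdRate_succ (hb : 0 ≤ b) : IsConvexSeq fun n ↦ (pbdRate b (n + 1))⁻¹ := by
  have h := (isConvexSeq_inv_add_mul one_pos zero_le_one).mul_of_antitone
    (isConvexSeq_inv_add_mul one_pos hb) (antitone_inv_add_mul one_pos zero_le_one)
    (antitone_inv_add_mul one_pos hb) (fun n ↦ by positivity) (fun n ↦ by positivity)
  simpa only [pbdRate_succ, mul_inv, one_mul] using h

lemma hasSum_inverseMean (hp : ∀ n, 0 ≤ p n) (hps : Summable p) (hb : 0 ≤ b) (n : ℕ) :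
    HasSum (fun k : ℕ ↦ p k * (1 + b * ((n : ℝ) + k))⁻¹) (inverseMean b p n) := by
  refine (Summable.of_nonneg_of_le (fun k ↦ ?_) (fun k ↦ ?_) hps).hasSum
  · exact mul_nonneg (hp k) (by positivity)
  · exact mul_le_of_le_one_right (hp k)
      (inv_le_one_of_one_le₀ (le_add_of_nonneg_right (by positivity)))

lemma antitone_inverseMean (hp : ∀ n, 0 ≤ p n) (hps : Summable p) (hb : 0 ≤ b) :
    Antitone (inverseMean b p) := by
  intro m n hmn
  refine hasSum_le (fun k ↦ ?_) (hasSum_inverseMean hp hps hb n) (hasSum_inverseMean hp hps hb m)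
  have := hp k
  gcongr

lemma inverseMean_second_difference_le (hp : ∀ n, 0 ≤ p n) (hps : Summable p) (hb : 0 ≤ b)
    (n : ℕ) :
    inverseMean b p (n + 2) - 2 * inverseMean b p (n + 1) + inverseMean b p n ≤
      inverseMean b p 2 - 2 * inverseMean b p 1 + inverseMean b p 0 := by
  have hM := hasSum_inverseMean hp hps hb
  have hsum (n : ℕ) :=
    ((hM (n + 2)).sub ((hM (n + 1)).mul_left 2)).add (hM n)
  refine hasSum_le (fun k ↦ ?_) (hsum n) (hsum 0)
  have hinv := inv_second_difference_le (x := 1 + b * k) (y := 1 + b * (n + k)) (by positivity) hb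
    (by gcongr; simp)
  have := mul_le_mul_of_nonneg_left hinv (hp k)
  push_cast
  ring_nf at this ⊢
  linarith

namespace IsStationaryLaw

lemma hasSum_mean (hp : IsStationaryLaw a (pbdRate b) p) (hb : 0 ≤ b) :
    HasSum (fun k : ℕ ↦ k * p k) (a * inverseMean b p 0) := by
  have hM := hasSum_inverseMean (fun n ↦ (hp.pos n).le) hp.hasSum_one.summable hb 0
  have h := hp.hasSum_rate_mul (pbdRate_zero b) (h := fun k ↦ (1 + b * ((k : ℝ) - 1))⁻¹)
    (by simpa using hM)
  refine h.congr_fun fun k ↦ ?_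
  cases k with
  | zero => simp [pbdRate_zero]
  | succ k =>
    rw [pbdRate_succ]
    push_cast
    rw [add_sub_cancel_right]
    field_simp
    ring

lemma mul_inverseMean_succ_sub (hp : IsStationaryLaw a (pbdRate b) p) (hb : 0 ≤ b) (n : ℕ) :
    a * inverseMean b p (n + 1) - pbdRate b (n + 1) * inverseMean b p n =
      a * inverseMean b p 0 - (n + 1) := by
  have hM := hasSum_inverseMean (fun n ↦ (hp.pos n).le) hp.hasSum_one.summable hb
  have hleft := hp.hasSum_rate_mul (pbdRate_zero b) (h := fun k ↦ (1 + b * ((n : ℝ) + k))⁻¹)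
    (s := inverseMean b p (n + 1)) ((hM (n + 1)).congr_fun fun k ↦ by push_cast; ring_nf)
  have hright := ((hM n).mul_left (pbdRate b (n + 1))).add
    ((hp.hasSum_mean hb).sub (hp.hasSum_one.mul_left ((n : ℝ) + 1)))
  -- `β k = β (n + 1) + (k - (n + 1)) (1 + b (n + k))` for `β = pbdRate b`
  have := hleft.unique (hright.congr_fun fun k ↦ by
    rw [pbdRate_succ, pbdRate]
    field_simp
    ring)
  linarith

lemma inverseMean_second_difference_zero_le (hp : IsStationaryLaw a (pbdRate b) p) (ha : 0 < a)
    (hb : 0 ≤ b) :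
    inverseMean b p 2 - 2 * inverseMean b p 1 + inverseMean b p 0 ≤
      b / ((a + 1) * b + 1 + a / 2) := by
  set M := inverseMean b p
  have hanti : Antitone M :=
    antitone_inverseMean (fun n ↦ (hp.pos n).le) hp.hasSum_one.summable hb
  have h₀ := hp.mul_inverseMean_succ_sub hb 0
  have h₁ := hp.mul_inverseMean_succ_sub hb 1
  rw [pbdRate_succ] at h₀ h₁
  push_cast at h₀ h₁
  have heq : a * (M 2 - 2 * M 1 + M 0) = 2 * b - 2 * (a * b + b + 1) * (M 0 - M 1) := by
    linear_combination h₁ - 2 * (1 + b) * h₀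
  have hle : M 2 - 2 * M 1 + M 0 ≤ M 0 - M 1 := by linarith [hanti one_le_two]
  have := mul_le_mul_of_nonneg_left hle (by positivity : 0 ≤ 2 * (a * b + b + 1))
  rw [le_div_iff₀ (by positivity)]
  linarith

lemma isSteinSolution_inverseMean (hp : IsStationaryLaw a (pbdRate b) p) (hb : 0 ≤ b) :
    IsSteinSolution a (pbdRate b) p (fun n ↦ -n) (fun n ↦ inverseMean b p (n - 1)) where
  summable := by simpa only [neg_mul] using (hp.hasSum_mean hb).summable.neg
  -- truncated subtraction: `0 - 1 = 1 - 1` in `ℕ`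
  zero_eq_one := rfl
  equation n := by
    simp only [neg_mul, tsum_neg, (hp.hasSum_mean hb).tsum_eq, Nat.add_sub_cancel]
    cases n with
    | zero => simp [pbdRate_zero]
    | succ n =>
      rw [Nat.add_sub_cancel, hp.mul_inverseMean_succ_sub hb n]
      push_cast
      ring

lemma inverseMean_pred_second_difference_le (hp : IsStationaryLaw a (pbdRate b) p) (ha : 0 < a)
    (hb : 0 ≤ b) (n : ℕ) :
    inverseMean b p (n + 2 - 1) - 2 * inverseMean b p (n + 1 - 1) + inverseMean b p (n - 1) ≤
      b / ((a + 1) * b + 1 + a / 2) := by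
  have hp₀ (n : ℕ) := (hp.pos n).le
  cases n with
  | zero =>
    have h : inverseMean b p 1 ≤ inverseMean b p 0 :=
      antitone_inverseMean hp₀ hp.hasSum_one.summable hb zero_le_one
    have : 0 ≤ b / ((a + 1) * b + 1 + a / 2) := by positivity
    simp only [Nat.reduceAdd, Nat.reduceSub]
    linarith
  | succ n =>
    exact (inverseMean_second_difference_le hp₀ hp.hasSum_one.summable hb n).trans
      (hp.inverseMean_second_difference_zero_le ha hb)

end IsStationaryLaw

theorem IsSteinSolution.second_difference_le_of_lipschitz
    (hg : IsSteinSolution a (pbdRate b) p f g) (hp : IsStationaryLaw a (pbdRate b) p)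
    (ha : 0 < a) (hb : 0 ≤ b) (hf : ∀ n, |f (n + 1) - f n| ≤ 1) (n : ℕ) :
    g (n + 2) - 2 * g (n + 1) + g n ≤ 2 / a + b / ((a + 1) * b + 1 + a / 2) := by
  have hmono : Monotone fun n : ℕ ↦ f n - -n := by
    refine monotone_nat_of_le_succ fun n ↦ ?_
    push_cast
    linarith [(abs_le.1 (hf n)).1]
  have hγ := (hg.sub (hp.isSteinSolution_inverseMean hb)).second_difference_le_of_monotone hp ha
    (pbdRate_zero b) (isConvexSeq_pbdRate hb) (isConvexSeq_inv_pbdRate_succ hb) hmono n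
  have hstep : (f (n + 1) - -(n + 1 : ℕ) - (f n - -n)) / a ≤ 2 / a := by
    gcongr
    push_cast
    linarith [(abs_le.1 (hf n)).2]
  linarith [hp.inverseMean_pred_second_difference_le ha hb n]

theorem IsSteinSolution.abs_second_difference_le_of_lipschitz
    (hg : IsSteinSolution a (pbdRate b) p f g) (hp : IsStationaryLaw a (pbdRate b) p)
    (ha : 0 < a) (hb : 0 ≤ b) (hf : ∀ n, |f (n + 1) - f n| ≤ 1) (n : ℕ) :
    |g (n + 2) - 2 * g (n + 1) + g n| ≤ 2 / a + b / ((a + 1) * b + 1 + a / 2) := by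
  refine abs_le'.2 ⟨hg.second_difference_le_of_lipschitz hp ha hb hf n, ?_⟩
  have hf' (n : ℕ) : |-f (n + 1) - -f n| ≤ 1 := by
    rw [neg_sub_neg, abs_sub_comm]
    exact hf n
  linarith [hg.neg.second_difference_le_of_lipschitz hp ha hb hf' n]

lemma isStationaryLaw_pbdRate {C : ℝ} (ha : 0 < a) (hb : 0 ≤ b) (hC : 0 < C)
    (hp : ∀ n, p n = C * a ^ n / ∏ i ∈ range n, pbdRate b (i + 1)) (hp₁ : ∑' n, p n = 1) :
    IsStationaryLaw a (pbdRate b) p where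
  pos n := by
    rw [hp]
    exact div_pos (by positivity) (prod_pos fun i _ ↦ by rw [pbdRate_succ]; positivity)
  balance n := by
    have hβ : pbdRate b (n + 1) ≠ 0 := by rw [pbdRate_succ]; positivity
    rw [hp, hp, prod_range_succ, pow_succ]
    field_simp
  hasSum_one := by
    have : Summable p := by
      by_contra h
      simp [tsum_eq_zero_of_not_summable h] at hp₁
    exact hp₁ ▸ this.hasSum

end PolynomialRates

/-- bound on the second difference `|Δ²g̃_f n|` for the PBD(a;0,1,b) Stein solution. -/
theorem stmt_6
    (a b : ℝ) (ha : 0 < a) (hb : 0 < b)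
    (C : ℝ) (hC : 0 < C) (π : ℕ → ℝ)
    (hπ : ∀ n : ℕ, π n =
      C * a ^ n / ∏ i ∈ Finset.range n, (((i : ℝ) + 1) + b * ((i : ℝ) + 1) * (i : ℝ)))
    (hπ1 : ∑' n, π n = 1)
    (f : ℕ → ℝ) (hf : ∀ x y : ℕ, |f x - f y| ≤ |(x : ℝ) - (y : ℝ)|)
    (hfs : Summable fun n => |f n| * π n)
    (g : ℕ → ℝ) (hg0 : g 0 = g 1)
    (hg : ∀ n : ℕ, a * g (n + 1) - ((n : ℝ) + b * (n : ℝ) * ((n : ℝ) - 1)) * g n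
      = f n - ∑' k, f k * π k)
    :
    ∀ n : ℕ, |g (n + 2) - 2 * g (n + 1) + g n| ≤ 2 / a + b / ((a + 1) * b + 1 + a / 2) := by
  have hstat : IsStationaryLaw a (pbdRate b) π :=
    isStationaryLaw_pbdRate ha hb.le hC (by simpa [pbdRate] using hπ) hπ1
  have hsol : IsSteinSolution a (pbdRate b) π f g :=
    { summable := .of_abs <| hfs.congr fun n ↦ by rw [abs_mul, abs_of_pos (hstat.pos n)]
      zero_eq_one := hg0
      equation := hg }
  exact hsol.abs_second_difference_le_of_lipschitz hstat ha hb.le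
    fun n ↦ by simpa using hf (n + 1) n
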